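/- The algebra homomorphisms K → k are exactly the four maps α_λ indexed by the 4th roots of unity λ ∈ k, where α_λ(a) = λ, α_λ(b) = α_λ(c) = 0, α_λ(d) = λ⁻¹. Moreover, under the convolution product (f ∗ g)(h) = Σ f(h₍₁₎)g(h₍₂₎) determined by the comultiplication Δ of K, these four homomorphisms form a group isomorphic to Z/4Z, generated by α_{ξ⁻¹}. -/

import Mathlib

open scoped TensorProduct

/-- Generators of the Hopf algebra `K`. -/
inductive KGen : Type
  | a | b | c | d

open FreeAlgebra in
/-- The defining relations of the algebra `K`. -/
inductive KRel (𝕜 : Type) [Field 𝕜] (ξ : 𝕜) :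
    FreeAlgebra 𝕜 KGen → FreeAlgebra 𝕜 KGen → Prop
  | ab : KRel 𝕜 ξ (ι 𝕜 KGen.a * ι 𝕜 KGen.b) (ξ • (ι 𝕜 KGen.b * ι 𝕜 KGen.a))
  | ac : KRel 𝕜 ξ (ι 𝕜 KGen.a * ι 𝕜 KGen.c) (ξ • (ι 𝕜 KGen.c * ι 𝕜 KGen.a))
  | cb : KRel 𝕜 ξ (ι 𝕜 KGen.c * ι 𝕜 KGen.b) 0
  | bc : KRel 𝕜 ξ (ι 𝕜 KGen.b * ι 𝕜 KGen.c) 0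
  | cd : KRel 𝕜 ξ (ι 𝕜 KGen.c * ι 𝕜 KGen.d) (ξ • (ι 𝕜 KGen.d * ι 𝕜 KGen.c))
  | bd : KRel 𝕜 ξ (ι 𝕜 KGen.b * ι 𝕜 KGen.d) (ξ • (ι 𝕜 KGen.d * ι 𝕜 KGen.b))
  | adcomm : KRel 𝕜 ξ (ι 𝕜 KGen.a * ι 𝕜 KGen.d) (ι 𝕜 KGen.d * ι 𝕜 KGen.a)
  | adone : KRel 𝕜 ξ (ι 𝕜 KGen.a * ι 𝕜 KGen.d) 1
  | bsq : KRel 𝕜 ξ (ι 𝕜 KGen.b * ι 𝕜 KGen.b) 0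
  | csq : KRel 𝕜 ξ (ι 𝕜 KGen.c * ι 𝕜 KGen.c) 0
  | aac : KRel 𝕜 ξ (ι 𝕜 KGen.a * ι 𝕜 KGen.a * ι 𝕜 KGen.c) (ι 𝕜 KGen.b)
  | afour : KRel 𝕜 ξ (ι 𝕜 KGen.a ^ 4) 1

/-- The 8-dimensional algebra `K`, the smallest Hopf algebra whose coradical is not a
subalgebra, presented by generators and relations. -/
abbrev KAlg (𝕜 : Type) [Field 𝕜] (ξ : 𝕜) : Type := RingQuot (KRel 𝕜 ξ)

variable (𝕜 : Type) [Field 𝕜] (ξ : 𝕜)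

/-- The generator `a` of `K`. -/
noncomputable def kA : KAlg 𝕜 ξ := RingQuot.mkAlgHom 𝕜 (KRel 𝕜 ξ) (FreeAlgebra.ι 𝕜 KGen.a)
/-- The generator `b` of `K`. -/
noncomputable def kB : KAlg 𝕜 ξ := RingQuot.mkAlgHom 𝕜 (KRel 𝕜 ξ) (FreeAlgebra.ι 𝕜 KGen.b)
/-- The generator `c` of `K`. -/
noncomputable def kC : KAlg 𝕜 ξ := RingQuot.mkAlgHom 𝕜 (KRel 𝕜 ξ) (FreeAlgebra.ι 𝕜 KGen.c)
/-- The generator `d` of `K`. -/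
noncomputable def kD : KAlg 𝕜 ξ := RingQuot.mkAlgHom 𝕜 (KRel 𝕜 ξ) (FreeAlgebra.ι 𝕜 KGen.d)

/-- The comultiplication of `K` takes the prescribed values on the generators. -/
def KComulOn (Δ : KAlg 𝕜 ξ →ₐ[𝕜] KAlg 𝕜 ξ ⊗[𝕜] KAlg 𝕜 ξ) : Prop :=
  Δ (kA 𝕜 ξ) = kA 𝕜 ξ ⊗ₜ[𝕜] kA 𝕜 ξ + kB 𝕜 ξ ⊗ₜ[𝕜] kC 𝕜 ξ ∧
  Δ (kB 𝕜 ξ) = kA 𝕜 ξ ⊗ₜ[𝕜] kB 𝕜 ξ + kB 𝕜 ξ ⊗ₜ[𝕜] kD 𝕜 ξ ∧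
  Δ (kC 𝕜 ξ) = kC 𝕜 ξ ⊗ₜ[𝕜] kA 𝕜 ξ + kD 𝕜 ξ ⊗ₜ[𝕜] kC 𝕜 ξ ∧
  Δ (kD 𝕜 ξ) = kC 𝕜 ξ ⊗ₜ[𝕜] kB 𝕜 ξ + kD 𝕜 ξ ⊗ₜ[𝕜] kD 𝕜 ξ

/-- The counit of `K` takes the prescribed values on the generators. -/
def KCounitOn (ε : KAlg 𝕜 ξ →ₐ[𝕜] 𝕜) : Prop :=
  ε (kA 𝕜 ξ) = 1 ∧ ε (kB 𝕜 ξ) = 0 ∧ ε (kC 𝕜 ξ) = 0 ∧ ε (kD 𝕜 ξ) = 1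

/-- The convolution product of two linear functionals on `K`, with respect to a
comultiplication `Δ`: `(f ∗ g)(h) = Σ f(h₍₁₎) g(h₍₂₎)`. -/
noncomputable def KConv (𝕜 : Type) [Field 𝕜] (ξ : 𝕜)
    (Δ : KAlg 𝕜 ξ →ₐ[𝕜] KAlg 𝕜 ξ ⊗[𝕜] KAlg 𝕜 ξ)
    (f g : KAlg 𝕜 ξ →ₗ[𝕜] 𝕜) : KAlg 𝕜 ξ →ₗ[𝕜] 𝕜 :=
  LinearMap.mul' 𝕜 𝕜 ∘ₗ TensorProduct.map f g ∘ₗ Δ.toLinearMap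

theorem KAlg_hom_ext {𝕜 : Type} [Field 𝕜] {ξ : 𝕜} {f g : KAlg 𝕜 ξ →ₐ[𝕜] 𝕜}
    (ha : f (kA 𝕜 ξ) = g (kA 𝕜 ξ)) (hb : f (kB 𝕜 ξ) = g (kB 𝕜 ξ))
    (hc : f (kC 𝕜 ξ) = g (kC 𝕜 ξ)) (hd : f (kD 𝕜 ξ) = g (kD 𝕜 ξ)) : f = g := by
  apply RingQuot.ringQuot_ext'
  apply FreeAlgebra.hom_ext
  funext i
  cases i
  · exact ha
  · exact hb
  · exact hc
  · exact hd

theorem KAlg_rel {𝕜 : Type} [Field 𝕜] {ξ : 𝕜} (f : KAlg 𝕜 ξ →ₐ[𝕜] 𝕜)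
    {x y : FreeAlgebra 𝕜 KGen} (h : KRel 𝕜 ξ x y) :
    f (RingQuot.mkAlgHom 𝕜 (KRel 𝕜 ξ) x) = f (RingQuot.mkAlgHom 𝕜 (KRel 𝕜 ξ) y) :=
  congrArg f (RingQuot.mkAlgHom_rel 𝕜 h)

theorem KAlg_hom_vals {𝕜 : Type} [Field 𝕜] {ξ : 𝕜} (f : KAlg 𝕜 ξ →ₐ[𝕜] 𝕜) :
    f (kA 𝕜 ξ) ^ 4 = 1 ∧ f (kB 𝕜 ξ) = 0 ∧ f (kC 𝕜 ξ) = 0 ∧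
      f (kD 𝕜 ξ) = (f (kA 𝕜 ξ))⁻¹ := by
  have h1 := KAlg_rel f KRel.afour
  have h2 := KAlg_rel f KRel.bsq
  have h3 := KAlg_rel f KRel.csq
  have h4 := KAlg_rel f KRel.adone
  simp only [map_mul, map_pow, map_one, map_zero, mul_self_eq_zero] at h1 h2 h3 h4
  exact ⟨h1, h2, h3, eq_inv_of_mul_eq_one_right h4⟩

/-- The values of `α_λ` on the generators. -/
def kAlphaVal {𝕜 : Type} [Field 𝕜] (lam : 𝕜) : KGen → 𝕜
  | KGen.a => lam
  | KGen.b => 0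
  | KGen.c => 0
  | KGen.d => lam⁻¹

theorem KAlg_exists {𝕜 : Type} [Field 𝕜] (ξ : 𝕜) (lam : 𝕜) (h : lam ^ 4 = 1) :
    ∃ f : KAlg 𝕜 ξ →ₐ[𝕜] 𝕜, f (kA 𝕜 ξ) = lam ∧ f (kB 𝕜 ξ) = 0 ∧ f (kC 𝕜 ξ) = 0 ∧
      f (kD 𝕜 ξ) = lam⁻¹ := by
  have h0 : lam ≠ 0 := by
    rintro rfl
    simp at h
  have key : ∀ ⦃x y : FreeAlgebra 𝕜 KGen⦄, KRel 𝕜 ξ x y →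
      FreeAlgebra.lift 𝕜 (kAlphaVal lam) x = FreeAlgebra.lift 𝕜 (kAlphaVal lam) y := by
    intro x y hxy
    cases hxy <;> simp [kAlphaVal, h0, h]
  refine ⟨RingQuot.liftAlgHom 𝕜 ⟨FreeAlgebra.lift 𝕜 (kAlphaVal lam), key⟩, ?_, ?_, ?_, ?_⟩ <;>
    simp [kA, kB, kC, kD, kAlphaVal]

/-- The algebra homomorphisms `K → 𝕜` are exactly the four maps `α_λ`
indexed by the 4th roots of unity `λ`, with `α_λ(a) = λ`, `α_λ(b) = α_λ(c) = 0`,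
`α_λ(d) = λ⁻¹`; moreover, under the convolution product determined by the comultiplication
`Δ` of `K`, they form a group isomorphic to `ℤ/4ℤ` generated by `α_{ξ⁻¹}`. -/
theorem stmt_2 (𝕜 : Type) [Field 𝕜] [IsAlgClosed 𝕜] [CharZero 𝕜]
    (ξ : 𝕜) (hξ : IsPrimitiveRoot ξ 4)
    (Δ : KAlg 𝕜 ξ →ₐ[𝕜] KAlg 𝕜 ξ ⊗[𝕜] KAlg 𝕜 ξ) (hΔ : KComulOn 𝕜 ξ Δ) :
    -- every algebra homomorphism `K → 𝕜` is an `α_λ`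
    (∀ f : KAlg 𝕜 ξ →ₐ[𝕜] 𝕜, ∃ lam : 𝕜, lam ^ 4 = 1 ∧
      f (kA 𝕜 ξ) = lam ∧ f (kB 𝕜 ξ) = 0 ∧ f (kC 𝕜 ξ) = 0 ∧ f (kD 𝕜 ξ) = lam⁻¹) ∧
    -- conversely, each 4th root of unity `λ` yields exactly one such homomorphism `α_λ`
    (∀ lam : 𝕜, lam ^ 4 = 1 → ∃! f : KAlg 𝕜 ξ →ₐ[𝕜] 𝕜,
      f (kA 𝕜 ξ) = lam ∧ f (kB 𝕜 ξ) = 0 ∧ f (kC 𝕜 ξ) = 0 ∧ f (kD 𝕜 ξ) = lam⁻¹) ∧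
    -- under convolution they form a group isomorphic to `ℤ/4ℤ`, generated by `α_{ξ⁻¹}`
    (∃ φ : ZMod 4 ≃ (KAlg 𝕜 ξ →ₐ[𝕜] 𝕜),
      ((φ 1) (kA 𝕜 ξ) = ξ⁻¹ ∧ (φ 1) (kB 𝕜 ξ) = 0 ∧ (φ 1) (kC 𝕜 ξ) = 0 ∧
        (φ 1) (kD 𝕜 ξ) = ξ) ∧
      ∀ m n : ZMod 4,
        KConv 𝕜 ξ Δ (φ m).toLinearMap (φ n).toLinearMap = (φ (m + n)).toLinearMap) := by
  classical
  have hx4 : ξ⁻¹ ^ 4 = 1 := hξ.inv.pow_eq_one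
  have hpow : ∀ m : ℕ, (ξ⁻¹ ^ m) ^ 4 = 1 := fun m => by
    rw [← pow_mul, mul_comm, pow_mul, hx4, one_pow]
  choose α hα using fun m : ZMod 4 => KAlg_exists ξ (ξ⁻¹ ^ m.val) (hpow m.val)
  have hext : ∀ f g : KAlg 𝕜 ξ →ₐ[𝕜] 𝕜, f (kA 𝕜 ξ) = g (kA 𝕜 ξ) → f = g := by
    intro f g h
    obtain ⟨-, fb, fc, fd⟩ := KAlg_hom_vals f
    obtain ⟨-, gb, gc, gd⟩ := KAlg_hom_vals g
    exact KAlg_hom_ext h (fb.trans gb.symm) (fc.trans gc.symm) (by rw [fd, gd, h])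
  refine ⟨fun f => ⟨f (kA 𝕜 ξ), ?_⟩, fun lam hl => ?_, ?_⟩
  · obtain ⟨h1, h2, h3, h4⟩ := KAlg_hom_vals f
    exact ⟨h1, rfl, h2, h3, h4⟩
  · obtain ⟨f, hf⟩ := KAlg_exists ξ lam hl
    exact ⟨f, hf, fun g hg => hext g f (hg.1.trans hf.1.symm)⟩
  · have hbij : Function.Bijective α := by
      constructor
      · intro m n hmn
        have h1 : ξ⁻¹ ^ m.val = ξ⁻¹ ^ n.val := by
          rw [← (hα m).1, ← (hα n).1, hmn]
        exact ZMod.val_injective 4 (hξ.inv.pow_inj (ZMod.val_lt m) (ZMod.val_lt n) h1)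
      · intro f
        obtain ⟨i, hi, hfi⟩ := hξ.inv.eq_pow_of_pow_eq_one (KAlg_hom_vals f).1
        refine ⟨(i : ZMod 4), hext _ _ ?_⟩
        rw [(hα _).1, ← hfi, ZMod.val_natCast, Nat.mod_eq_of_lt hi]
    refine ⟨Equiv.ofBijective α hbij, ?_, fun m n => ?_⟩
    · have h := hα 1
      have hv : (1 : ZMod 4).val = 1 := rfl
      rw [hv, pow_one, inv_inv] at h
      exact h
    · simp only [Equiv.ofBijective_apply]
      have h : ((Algebra.TensorProduct.lmul' 𝕜 (S := 𝕜)).comp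
          ((Algebra.TensorProduct.map (α m) (α n)).comp Δ)) = α (m + n) := by
        apply hext
        rw [AlgHom.comp_apply, AlgHom.comp_apply, hΔ.1]
        simp only [map_add, Algebra.TensorProduct.map_tmul,
          Algebra.TensorProduct.lmul'_apply_tmul]
        rw [(hα m).1, (hα n).1, (hα m).2.1, (hα (m + n)).1, zero_mul, add_zero, ← pow_add,
          ZMod.val_add]
        exact pow_eq_pow_mod _ hx4
      rw [← h]
      rfl
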